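/- For every g ∈ D and every polynomial f with g + f ∈ ⟨𝓕⟩, one has g ≼_w f, where ≼_w is the weighted monomial order determined by w, extended to polynomials as described. -/

import Mathlib

open MvPolynomial

/-- Monomials in the variables `σ`, represented by their exponent vectors. -/
abbrev Mon (σ : Type*) := σ →₀ ℕ

/-- A monomial order: a total order on monomials such that `1 ≼ t` for every monomial `t`
and `t ≼ u → t·v ≼ u·v` (written additively on exponent vectors). -/
structure MonOrd (σ : Type*) where
  le : Mon σ → Mon σ → Prop
  le_refl : ∀ t, le t t
  le_trans : ∀ t u v, le t u → le u v → le t v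
  le_antisymm : ∀ t u, le t u → le u t → t = u
  le_total : ∀ t u, le t u ∨ le u t
  zero_le : ∀ t, le 0 t
  add_le_add : ∀ t u v, le t u → le (t + v) (u + v)

/-- Strict version of a monomial order. -/
def MonOrd.lt {σ : Type*} (μ : MonOrd σ) (t u : Mon σ) : Prop := μ.le t u ∧ t ≠ u

/-- The extension of a monomial order (given by the relation `r` on monomials) to polynomials:
`g ≼ f` iff `g = f` or the greatest monomial on which `f` and `g` differ occurs in `f`.
(This is the closed form of the recursive definition: `g ≼ f` iff `g = f`, or
`HT g ≺ HT f`, or `HT g = HT f` and `g - HT g ≼ f - HT f`, with `0` the least polynomial.) -/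
def polyLe {σ : Type*} (r : Mon σ → Mon σ → Prop) (g f : MvPolynomial σ (ZMod 2)) : Prop :=
  g = f ∨ ∃ t, t ∈ f.support ∧ t ∉ g.support ∧
    ∀ u : Mon σ, ((u ∈ f.support ∧ u ∉ g.support) ∨ (u ∈ g.support ∧ u ∉ f.support)) → r u t

/-- Strict extension of a monomial order to polynomials. -/
def polyLt {σ : Type*} (r : Mon σ → Mon σ → Prop) (g f : MvPolynomial σ (ZMod 2)) : Prop :=
  polyLe r g f ∧ g ≠ f

/-- `S_F`: the set of non-residual polynomials with respect to `F` and the monomial order `r`,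
i.e. those `f` admitting a `g` with `f + g ∈ ⟨F⟩` and `g ≺ f`. -/
def SF {σ : Type*} (r : Mon σ → Mon σ → Prop) (F : Set (MvPolynomial σ (ZMod 2))) :
    Set (MvPolynomial σ (ZMod 2)) :=
  {f | ∃ g, f + g ∈ Ideal.span F ∧ polyLt r g f}

/-- `t` is the head monomial (`r`-greatest monomial) of the polynomial `f`. -/
def IsHT {σ : Type*} (r : Mon σ → Mon σ → Prop) (f : MvPolynomial σ (ZMod 2)) (t : Mon σ) :
    Prop :=
  t ∈ f.support ∧ ∀ u ∈ f.support, r u t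

/-- `HT(S)`: the set of head monomials (as polynomials) of the nonzero elements of `S`. -/
def HTset {σ : Type*} (r : Mon σ → Mon σ → Prop) (S : Set (MvPolynomial σ (ZMod 2))) :
    Set (MvPolynomial σ (ZMod 2)) :=
  {p | ∃ f ∈ S, f ≠ 0 ∧ ∃ t, IsHT r f t ∧ p = monomial t 1}

/-- The divisibility (componentwise) order `◁` on monomials. -/
def triMon {σ : Type*} (t u : Mon σ) : Prop := ∀ x, t x ≤ u x

/-- The order `◁` on polynomials: `p ◁ q` iff there is an injective map `φ` from the
monomials of `p` to the monomials of `q` with `t ◁ φ t` for each monomial `t` of `p`. -/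
def triPoly {σ : Type*} (p q : MvPolynomial σ (ZMod 2)) : Prop :=
  ∃ φ : Mon σ → Mon σ, Set.InjOn φ ↑p.support ∧ ∀ t ∈ p.support, φ t ∈ q.support ∧ triMon t (φ t)

/-- Upward closure with respect to `◁`. -/
def upClo {σ : Type*} (A : Set (MvPolynomial σ (ZMod 2))) : Set (MvPolynomial σ (ZMod 2)) :=
  {q | ∃ p ∈ A, triPoly p q}

/-- `Min_◁(A)`: the `◁`-minimal elements of `A`. -/
def minTri {σ : Type*} (A : Set (MvPolynomial σ (ZMod 2))) : Set (MvPolynomial σ (ZMod 2)) :=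
  {p | p ∈ A ∧ ∀ q ∈ A, triPoly q p → q = p}

/-- `G` is a Gröbner basis of the ideal `I` with respect to the monomial order `r`. -/
def IsGB {σ : Type*} (r : Mon σ → Mon σ → Prop) (G : Finset (MvPolynomial σ (ZMod 2)))
    (I : Ideal (MvPolynomial σ (ZMod 2))) : Prop :=
  (↑G : Set (MvPolynomial σ (ZMod 2))) ⊆ ↑I ∧
    Ideal.span (↑G : Set (MvPolynomial σ (ZMod 2))) = I ∧
    Ideal.span (HTset r (↑I : Set (MvPolynomial σ (ZMod 2)))) = Ideal.span (HTset r ↑G)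

/-- `G` is a reduced Gröbner basis of `I` with respect to `r`. -/
def IsReducedGB {σ : Type*} (r : Mon σ → Mon σ → Prop) (G : Finset (MvPolynomial σ (ZMod 2)))
    (I : Ideal (MvPolynomial σ (ZMod 2))) : Prop :=
  IsGB r G I ∧ ∀ f ∈ G, ¬ ∀ t ∈ f.support,
    (monomial t 1 : MvPolynomial σ (ZMod 2)) ∈
      Ideal.span (HTset r ((↑G : Set (MvPolynomial σ (ZMod 2))) \ {f}))

/-- The variable set `X`: the special variables `s, ℓ, c, c̄, b, b̄` together with, for each
`0 ≤ i ≤ n`, the variables `s_i, f_i, q_{ji}, c_{ji}, b_{ji}` (`1 ≤ j ≤ 4`, encoded by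
`j : Fin 4`) and their barred copies (`bar = true`). -/
inductive MVar (n : ℕ) : Type where
  | vs | vl | vc | vcb | vb | vbb
  | vS (bar : Bool) (i : Fin (n+1))
  | vF (bar : Bool) (i : Fin (n+1))
  | vQ (bar : Bool) (j : Fin 4) (i : Fin (n+1))
  | vC (bar : Bool) (j : Fin 4) (i : Fin (n+1))
  | vB (bar : Bool) (j : Fin 4) (i : Fin (n+1))
deriving DecidableEq

open MVar

abbrev MPoly (n : ℕ) := MvPolynomial (MVar n) (ZMod 2)

/-- `e(n) = 2^(2^n)`. -/
def en (n : ℕ) : ℕ := 2 ^ 2 ^ n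

/-- The set `P_0` (barred copy if `bar = true`). -/
def P0 (n : ℕ) (bar : Bool) : Set (MPoly n) :=
  {p | ∃ j : Fin 4, p =
    X (vB bar j 0) ^ 2 * X (vC bar j 0) * X (vF bar 0) + X (vC bar j 0) * X (vS bar 0)}

/-- The set `P_m` for `m = i+1`, `i : Fin n` (barred copy if `bar = true`).
Here `i.succ` plays the role of `m` and `i.castSucc` the role of `m-1`; the indices
`1,2,3,4` of the paper are encoded as `0,1,2,3 : Fin 4`. -/
def Pm (n : ℕ) (bar : Bool) (i : Fin n) : Set (MPoly n) :=
  ({ X (vQ bar 0 i.succ) * X (vC bar 0 i.castSucc) * X (vS bar i.castSucc) + X (vS bar i.succ),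
    X (vQ bar 1 i.succ) * X (vC bar 1 i.castSucc) * X (vS bar i.castSucc)
      + X (vQ bar 0 i.succ) * X (vB bar 0 i.castSucc) * X (vC bar 0 i.castSucc)
        * X (vF bar i.castSucc),
    X (vQ bar 2 i.succ) * X (vC bar 2 i.castSucc) * X (vF bar i.castSucc)
      + X (vQ bar 1 i.succ) * X (vC bar 1 i.castSucc) * X (vF bar i.castSucc),
    X (vQ bar 2 i.succ) * X (vB bar 0 i.castSucc) * X (vC bar 2 i.castSucc)
        * X (vS bar i.castSucc)
      + X (vQ bar 1 i.succ) * X (vB bar 3 i.castSucc) * X (vC bar 1 i.castSucc)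
        * X (vS bar i.castSucc),
    X (vQ bar 3 i.succ) * X (vB bar 3 i.castSucc) * X (vC bar 3 i.castSucc)
        * X (vF bar i.castSucc)
      + X (vQ bar 2 i.succ) * X (vC bar 2 i.castSucc) * X (vS bar i.castSucc),
    X (vQ bar 3 i.succ) * X (vC bar 3 i.castSucc) * X (vS bar i.castSucc)
      + X (vF bar i.succ) } : Set (MPoly n))
  ∪ {p | ∃ j : Fin 4, p =
      X (vQ bar 1 i.succ) * X (vB bar 2 i.castSucc) * X (vB bar j i.succ) * X (vC bar j i.succ)
          * X (vF bar i.castSucc)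
        + X (vQ bar 1 i.succ) * X (vB bar 1 i.castSucc) * X (vC bar j i.succ)
          * X (vF bar i.castSucc)}

/-- The set `P = P_0 ∪ P_1 ∪ ⋯ ∪ P_n`; for `bar = true` this is the barred copy `P̄`
(the image of `P` under the substitution replacing each variable by its barred version). -/
def PP (n : ℕ) (bar : Bool) : Set (MPoly n) := P0 n bar ∪ ⋃ i : Fin n, Pm n bar i

/-- The set `G` of seven extra binomials. -/
def GG (n : ℕ) : Set (MPoly n) :=
  { X (vB false 3 (Fin.last n)) * X vl * X vb + X vl * X vc,
    X (vB false 3 (Fin.last n)) * X vl * X vbb + X vl * X vcb,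
    X (vC false 3 (Fin.last n)) * X (vF false (Fin.last n)) + X vl,
    X (vC true 3 (Fin.last n)) * X (vF true (Fin.last n))
      + X (vC false 3 (Fin.last n)) * X (vS false (Fin.last n)),
    X (vB true 3 (Fin.last n)) * X (vC false 3 (Fin.last n)) * X (vS false (Fin.last n))
      + X (vC false 3 (Fin.last n)) * X (vS false (Fin.last n)) * X vb,
    X (vB true 3 (Fin.last n)) * X (vC false 3 (Fin.last n)) * X (vS false (Fin.last n))
      + X (vC false 3 (Fin.last n)) * X (vS false (Fin.last n)) * X vbb,
    X (vC true 3 (Fin.last n)) * X (vS true (Fin.last n)) + X vs }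

/-- The set `𝓕 = P ∪ P̄ ∪ G`. -/
def FF (n : ℕ) : Set (MPoly n) := PP n false ∪ PP n true ∪ GG n

/-- The set `C = {ℓ c̄^{m1} c^{m2} : m1 + m2 = e(n)}` of monomials. -/
def Cmon (n : ℕ) : Set (Mon (MVar n)) :=
  {α | ∃ m1 m2 : ℕ, m1 + m2 = en n ∧
    α = Finsupp.single vl 1 + Finsupp.single vcb m1 + Finsupp.single vc m2}

/-- The set `D = {ℓ^j c̄^{m1} c^{m2} : j ∈ {0,1}, j + m1 + m2 ≤ e(n)}` of monomials. -/
def Dmon (n : ℕ) : Set (Mon (MVar n)) :=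
  {α | ∃ j m1 m2 : ℕ, j ≤ 1 ∧ j + m1 + m2 ≤ en n ∧
    α = Finsupp.single vl j + Finsupp.single vcb m1 + Finsupp.single vc m2}

/-- An injective rank function on the variables realizing the variable ordering
(from least to greatest): `s, c, c̄, ℓ, b, b̄`; then `s_0,…,s_n`; `f_0,…,f_n`;
`c_{10},…,c_{1n}; …; c_{40},…,c_{4n}`; `b_{10},…,b_{4n}`; `q_{10},…,q_{4n}`;
then the barred variables in the same pattern. -/
def vrank (n : ℕ) : MVar n → ℕ
  | .vs => 0
  | .vc => 1
  | .vcb => 2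
  | .vl => 3
  | .vb => 4
  | .vbb => 5
  | .vS bar i => 6 + (cond bar (14 * (n+1)) 0) + (i : ℕ)
  | .vF bar i => 6 + (cond bar (14 * (n+1)) 0) + (n+1) + (i : ℕ)
  | .vC bar j i => 6 + (cond bar (14 * (n+1)) 0) + 2*(n+1) + (j : ℕ)*(n+1) + (i : ℕ)
  | .vB bar j i => 6 + (cond bar (14 * (n+1)) 0) + 6*(n+1) + (j : ℕ)*(n+1) + (i : ℕ)
  | .vQ bar j i => 6 + (cond bar (14 * (n+1)) 0) + 10*(n+1) + (j : ℕ)*(n+1) + (i : ℕ)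

/-- The lexicographic monomial order on `X`: `t ≼_lex u` iff `t = u` or the exponents differ
somewhere and at the greatest variable (w.r.t. `vrank`) where they differ, the exponent of
`t` is smaller. -/
def lexLe (n : ℕ) (t u : Mon (MVar n)) : Prop :=
  t = u ∨ ∃ x : MVar n, t x < u x ∧ ∀ y : MVar n, vrank n x < vrank n y → t y = u y

/-- The total degree of a monomial. -/
def mdeg {σ : Type*} (t : Mon σ) : ℕ := t.sum fun _ k => k

/-- The degree lexicographic monomial order. -/
def degLexLe (n : ℕ) (t u : Mon (MVar n)) : Prop :=
  mdeg t < mdeg u ∨ (mdeg t = mdeg u ∧ lexLe n t u)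

/-- Weighted degree of a monomial with respect to a weight map `w`. -/
noncomputable def wdeg {n : ℕ} (w : MVar n → ℝ) (t : Mon (MVar n)) : ℝ :=
  t.sum fun x k => (k : ℝ) * w x

/-- The weighted monomial order determined by the weight map `w`. -/
def wLe {n : ℕ} (w : MVar n → ℝ) (t u : Mon (MVar n)) : Prop := t = u ∨ wdeg w t < wdeg w u

/-! Call a set `S` of monomials saturated if it is closed under replacing one monomial of an
element of `𝓕` by the other inside a product. Since every element of `𝓕` is a sum of two
monomials, the sum of the coefficients at the monomials of a saturated set is a linear functional
that vanishes on `⟨𝓕⟩`. So if `g ∈ S` is a monomial and `g + f ∈ ⟨𝓕⟩`, then some monomial of `f`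
lies in `S`, and `g ≼ f` follows once every monomial of `S` is at least `g`.

For `g = ℓ c̄^{m₁} c^{m₂}`, take for `S` the monomials passing for intermediate states of the rules
`𝓕` started at `g`. These rules simulate a counter: from `ℓ`, that is `c_{4n} f_n`, one can undo a
run of level `n`, and a complete run from `s_n` to `f_n` creates `e(n)` factors `b_{4n}`. In `S`
these factors come from the replacement of `c` and `c̄` by `b` and `b̄`, so there are at most `m₁ +
m₂ < e(n)` of them. Hence `s_n` is never reached, and neither are the barred variables nor `s`.
Each monomial of `S` contains `ℓ` or `c_{4n}`, and keeps the total exponents of `c, b` and of `c̄,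
b̄`, which makes it at least `g`.

For `g = c̄^{m₁} c^{m₂}`, the ideal `⟨𝓕⟩` is contained in the one generated by all variables other
than `c` and `c̄`, so `g` itself is a monomial of `f`. -/

section Saturation

variable {σ R : Type*} [CommRing R]

open Classical in
/-- The linear functional sending a polynomial to the sum of its coefficients at the monomials
of `S`. -/
noncomputable def coeffSum (S : Set (Mon σ)) : MvPolynomial σ R →ₗ[R] R :=
  (basisMonomials σ R).constr R fun t => if t ∈ S then 1 else 0

/-- `p` is a difference `u - v` of monomials such that `t·u ∈ S` iff `t·v ∈ S` for all monomials
`t`: the set `S` is saturated for the rewriting rule `u ↔ v`. -/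
def Respects (S : Set (Mon σ)) (p : MvPolynomial σ R) : Prop :=
  ∃ u v : Mon σ, p = monomial u 1 - monomial v 1 ∧ ∀ t, t + u ∈ S ↔ t + v ∈ S

/-- `p` is a monomial none of whose multiples belongs to `S`. -/
def Avoids (S : Set (Mon σ)) (p : MvPolynomial σ R) : Prop :=
  ∃ u : Mon σ, p = monomial u 1 ∧ ∀ t, t + u ∉ S

theorem Avoids.mul_X {S : Set (Mon σ)} {p : MvPolynomial σ R} (hp : Avoids S p) (x : σ) :
    Avoids S (p * X x) := by
  obtain ⟨u, rfl, hu⟩ := hp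
  refine ⟨.single x 1 + u, ?_, fun t => ?_⟩
  · rw [X, monomial_mul, mul_one, add_comm]
  · rw [← add_assoc]
    exact hu _

open Classical in
theorem coeffSum_monomial (S : Set (Mon σ)) (t : Mon σ) (c : R) :
    coeffSum S (monomial t c) = if t ∈ S then c else 0 := by
  have h : monomial t c = c • basisMonomials σ R t := by simp [smul_monomial]
  rw [h, map_smul, coeffSum, Module.Basis.constr_basis, smul_ite, smul_eq_mul, mul_one, smul_zero]

theorem coeffSum_eq_zero {S : Set (Mon σ)} {f : MvPolynomial σ R}
    (h : ∀ t ∈ f.support, t ∉ S) : coeffSum S f = 0 := by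
  rw [f.as_sum, map_sum]
  exact Finset.sum_eq_zero fun t ht => by rw [coeffSum_monomial, if_neg (h t ht)]

theorem coeffSum_mul_eq_zero {S : Set (Mon σ)} {F : Set (MvPolynomial σ R)}
    (hF : ∀ p ∈ F, Respects S p) {p : MvPolynomial σ R} (hp : p ∈ Ideal.span F)
    (q : MvPolynomial σ R) : coeffSum S (q * p) = 0 := by
  classical
  induction hp using Submodule.span_induction generalizing q with
  | zero => rw [mul_zero, map_zero]
  | add x y _ _ hx hy => rw [mul_add, map_add, hx, hy, add_zero]
  | smul a x _ hx => rw [smul_eq_mul, ← mul_assoc, hx]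
  | mem x hx =>
    obtain ⟨u, v, rfl, huv⟩ := hF x hx
    induction q using MvPolynomial.induction_on' with
    | monomial t c =>
      rw [mul_sub, monomial_mul, monomial_mul, map_sub, coeffSum_monomial, coeffSum_monomial,
        sub_eq_zero]
      simp only [huv]
    | add q r hq hr => rw [add_mul, map_add, hq, hr, add_zero]

theorem exists_mem_support_of_respects [Nontrivial R] {S : Set (Mon σ)}
    {F : Set (MvPolynomial σ R)} (hF : ∀ p ∈ F, Respects S p) {g : Mon σ} (hg : g ∈ S)
    {f : MvPolynomial σ R} (h : monomial g 1 - f ∈ Ideal.span F) : ∃ t ∈ f.support, t ∈ S := by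
  by_contra! hf
  have := coeffSum_mul_eq_zero hF h 1
  rw [one_mul, map_sub, coeffSum_monomial, if_pos hg, coeffSum_eq_zero hf, sub_zero] at this
  exact one_ne_zero this

end Saturation

theorem respects_add {σ : Type*} {S : Set (Mon σ)} {u v : Mon σ}
    (h : ∀ t, t + u ∈ S ↔ t + v ∈ S) :
    Respects S (monomial u 1 + monomial v 1 : MvPolynomial σ (ZMod 2)) :=
  ⟨u, v, (CharTwo.sub_eq_add _ _).symm, h⟩

theorem Avoids.respects_add {σ : Type*} {S : Set (Mon σ)} {p q : MvPolynomial σ (ZMod 2)}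
    (hp : Avoids S p) (hq : Avoids S q) : Respects S (p + q) := by
  obtain ⟨u, rfl, hu⟩ := hp
  obtain ⟨v, rfl, hv⟩ := hq
  exact _root_.respects_add fun t => iff_of_false (hu t) (hv t)

theorem eq_of_support_eq {σ : Type*} {f g : MvPolynomial σ (ZMod 2)}
    (h : f.support = g.support) : f = g := by
  ext t
  have h_iff : coeff t f ≠ 0 ↔ coeff t g ≠ 0 := by rw [← mem_support_iff, h, mem_support_iff]
  generalize coeff t f = a, coeff t g = b at h_iff
  revert a b
  decide

namespace MonOrd

variable {σ : Type*} (μ : MonOrd σ)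

theorem le_of_le {t u : Mon σ} (h : t ≤ u) : μ.le t u := by
  obtain ⟨d, rfl⟩ := exists_add_of_le h
  simpa only [zero_add, add_comm d t] using μ.add_le_add 0 d t (μ.zero_le d)

theorem add_le_add_of_le_of_le {t u t' u' : Mon σ} (h : μ.le t u) (h' : μ.le t' u') :
    μ.le (t + t') (u + u') :=
  μ.le_trans _ (u + t') _ (μ.add_le_add _ _ _ h)
    (by simpa only [add_comm] using μ.add_le_add _ _ u h')

theorem single_le_single {x y : σ} (h : μ.le (.single x 1) (.single y 1)) (k : ℕ) :
    μ.le (.single x k) (.single y k) := by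
  induction k with
  | zero => simpa using μ.le_refl 0
  | succ k ih => simpa using μ.add_le_add_of_le_of_le ih h

theorem exists_isGreatest {s : Finset (Mon σ)} (hs : s.Nonempty) :
    ∃ t ∈ s, ∀ u ∈ s, μ.le u t := by
  induction hs using Finset.Nonempty.cons_induction with
  | singleton a => exact ⟨a, by simp, by simp [μ.le_refl]⟩
  | cons a s ha _ ih =>
    obtain ⟨t, ht, hmax⟩ := ih
    rcases μ.le_total a t with hat | hta
    · exact ⟨t, by simp [ht], by simpa [hat] using hmax⟩
    · exact ⟨a, by simp, by
        simpa [μ.le_refl] using fun u hu => μ.le_trans _ _ _ (hmax u hu) hta⟩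

theorem polyLe_monomial {g t : Mon σ} {f : MvPolynomial σ (ZMod 2)} (ht : t ∈ f.support)
    (hgt : μ.le g t) : polyLe μ.le (monomial g 1) f := by
  classical
  rw [polyLe, or_iff_not_imp_left, support_monomial, if_neg one_ne_zero]
  intro hne
  have hsupp : (symmDiff f.support {g}).Nonempty := by
    rw [Finset.nonempty_iff_ne_empty, ← Finset.bot_eq_empty, Ne, symmDiff_eq_bot]
    refine fun h => hne (eq_of_support_eq ?_)
    rw [h, support_monomial, if_neg one_ne_zero]
  obtain ⟨m, hm, hmax⟩ := μ.exists_isGreatest hsupp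
  simp only [Finset.mem_symmDiff] at hm hmax
  rcases hm with hm | ⟨hmg, hmf⟩
  · exact ⟨m, hm.1, hm.2, hmax⟩
  · obtain rfl := Finset.mem_singleton.1 hmg
    have htm : t ∉ ({m} : Finset (Mon σ)) := by
      rw [Finset.mem_singleton]
      exact fun h => hmf (h ▸ ht)
    exact absurd (μ.le_antisymm _ _ (hmax t (.inl ⟨ht, htm⟩)) hgt)
      (htm ∘ Finset.mem_singleton.2)

end MonOrd

theorem en_succ (m : ℕ) : en (m + 1) = en m * en m := by
  rw [en, en, pow_succ 2 m, mul_two, pow_add]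

theorem add_single_eq_single_iff {ι : Type*} [DecidableEq ι] (f : ι → ℕ) (a b : ι) :
    f + Pi.single a 1 = Pi.single b 1 ↔ f = 0 ∧ a = b := by
  refine ⟨fun h => ?_, fun ⟨hf, hab⟩ => by rw [hf, hab, zero_add]⟩
  obtain rfl : a = b := by
    by_contra hab
    have := congrFun h a
    simp [hab] at this
  exact ⟨add_eq_right.1 h, rfl⟩

/-- The exponents of the variables of one level `m` in a monomial: `tok true` and `tok false` are
those of `s_m` and `f_m`, and `q`, `c`, `b` those of `q_{jm}`, `c_{jm}`, `b_{jm}`. -/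
@[ext] structure Level where
  tok : Bool → ℕ
  q : Fin 4 → ℕ
  c : Fin 4 → ℕ
  b : Fin 4 → ℕ

namespace Level

instance : Zero Level := ⟨⟨0, 0, 0, 0⟩⟩

instance : Add Level := ⟨fun U V => ⟨U.tok + V.tok, U.q + V.q, U.c + V.c, U.b + V.b⟩⟩

@[simp] theorem tok_zero : (0 : Level).tok = 0 := rfl
@[simp] theorem q_zero : (0 : Level).q = 0 := rfl
@[simp] theorem c_zero : (0 : Level).c = 0 := rfl
@[simp] theorem b_zero : (0 : Level).b = 0 := rfl
@[simp] theorem tok_add (U V : Level) : (U + V).tok = U.tok + V.tok := rfl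
@[simp] theorem q_add (U V : Level) : (U + V).q = U.q + V.q := rfl
@[simp] theorem c_add (U V : Level) : (U + V).c = U.c + V.c := rfl
@[simp] theorem b_add (U V : Level) : (U + V).b = U.b + V.b := rfl

instance : AddCancelCommMonoid Level where
  add_assoc _ _ _ := Level.ext (add_assoc ..) (add_assoc ..) (add_assoc ..) (add_assoc ..)
  zero_add _ := Level.ext (zero_add _) (zero_add _) (zero_add _) (zero_add _)
  add_zero _ := Level.ext (add_zero _) (add_zero _) (add_zero _) (add_zero _)
  add_comm _ _ := Level.ext (add_comm ..) (add_comm ..) (add_comm ..) (add_comm ..)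
  nsmul := nsmulRec
  add_left_cancel U V W h := Level.ext (add_left_cancel (congrArg tok h))
    (add_left_cancel (congrArg q h)) (add_left_cancel (congrArg c h))
    (add_left_cancel (congrArg b h))

theorem add_eq_zero_iff {U V : Level} : U + V = 0 ↔ U = 0 ∧ V = 0 := by
  simp only [Level.ext_iff, tok_add, q_add, c_add, b_add, tok_zero, q_zero, c_zero, b_zero,
    add_eq_zero]
  tauto

end Level

section Runs

/-- The lowest nonzero level of `L` is `p`, and it carries exactly one of `s_p` and `f_p`, selected
by `τ`, and no `q_{jp}`. -/
structure HasTok (L : ℕ → Level) (p : ℕ) (τ : Bool) : Prop where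
  eq_zero : ∀ k < p, L k = 0
  tok : (L p).tok = Pi.single τ 1
  q : (L p).q = 0

/-- The cofactors of monomials with `HasTok` at `p` that preserve this property. -/
structure IsQuiet (L : ℕ → Level) (p : ℕ) : Prop where
  eq_zero : ∀ k < p, L k = 0
  tok : (L p).tok = 0
  q : (L p).q = 0

/-- The admissible states of a level `m` during a run of level `m + 1`, where `E = en m`, the state
of the run is `q_a`, and `γ i` is the number of factors `b_{im}` once the current run of level `m`
is completed. The run makes `E` rounds through the states `q_2` and `q_3`. A round exchanges one
`b_{1m}` for one `b_{4m}`, and the `E` factors `b_{2m}` it starts with become `b_{3m}` one by one,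
each exchange being an increment. Hence `v = E * γ 0 + γ 1` increments are still to come. -/
def Phase (E : ℕ) (a : Fin 4) (γ : Fin 4 → ℕ) (v : ℕ) : Prop :=
  (if a = 1 ∨ a = 2 then γ 0 + γ 3 + 1 = E ∧ γ 1 + γ 2 = E
    else γ 0 + γ 3 = E ∧ γ 1 = 0 ∧ γ 2 = 0) ∧ v = E * γ 0 + γ 1

/-- `L`, restricted to the levels up to `m`, is an intermediate state of a run from `s_m` to `f_m`,
which multiplies `c_{im}` by `en m` factors `b_{im}`; of these, `v` are still to come. -/
inductive Pending (L : ℕ → Level) : ℕ → ℕ → Prop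
  | tok {m τ} (h : HasTok L m τ) : Pending L m (en m * τ.toNat)
  | step {m a v w} (h : Pending L m w) (htok : (L (m + 1)).tok = 0)
      (hq : (L (m + 1)).q = Pi.single a 1) (hc : (L m).c = Pi.single a 1)
      (hv : Phase (en m) a ((L m).b + Pi.single a w) v) : Pending L (m + 1) v

/-- `L` is an intermediate state of a run of level `m` acting on `c_{im}`, at the end of which the
exponents of the `b_{jm}` are given by `Γ`. This `Γ` is invariant under the rules. -/
def Balance (L : ℕ → Level) (m : ℕ) (i : Fin 4) (Γ : Fin 4 → ℕ) : Prop :=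
  ∃ v, Pending L m v ∧ (L m).c = Pi.single i 1 ∧ Γ = (L m).b + Pi.single i v

variable {L U : ℕ → Level} {m p : ℕ} {τ : Bool}

theorem HasTok.ne_zero (h : HasTok L p τ) : L p ≠ 0 := fun h0 => by
  have := congrFun h.tok τ
  simp [h0] at this

theorem HasTok.add_left_ne_zero (hU : HasTok U p τ) (L : ℕ → Level) : (L + U) p ≠ 0 :=
  fun h => hU.ne_zero (Level.add_eq_zero_iff.1 h).2

theorem hasTok_add_iff (hU : HasTok U p τ) {τ' : Bool} :
    HasTok (L + U) p τ' ↔ IsQuiet L p ∧ τ = τ' := by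
  constructor
  · intro h
    have htok := h.tok
    rw [Pi.add_apply, Level.tok_add, hU.tok, add_single_eq_single_iff] at htok
    exact ⟨⟨fun k hk => (Level.add_eq_zero_iff.1 (h.eq_zero k hk)).1, htok.1,
      (add_eq_zero.1 h.q).1⟩, htok.2⟩
  · rintro ⟨h, rfl⟩
    exact ⟨fun k hk => by rw [Pi.add_apply, h.eq_zero k hk, hU.eq_zero k hk, add_zero],
      by rw [Pi.add_apply, Level.tok_add, h.tok, hU.tok, zero_add],
      by rw [Pi.add_apply, Level.q_add, h.q, hU.q, add_zero]⟩

theorem pending_add_iff (hU : HasTok U p τ) {v : ℕ} :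
    Pending (L + U) p v ↔ IsQuiet L p ∧ v = en p * τ.toNat := by
  constructor
  · rintro (h | ⟨-, htok, -⟩)
    · obtain ⟨hL, rfl⟩ := (hasTok_add_iff hU).1 h
      exact ⟨hL, rfl⟩
    · rw [Pi.add_apply, Level.tok_add, hU.tok, add_eq_zero] at htok
      simp at htok
  · rintro ⟨hL, rfl⟩
    exact .tok ((hasTok_add_iff hU).2 ⟨hL, rfl⟩)

theorem balance_add_iff (hU : HasTok U p τ) {i : Fin 4} {Γ : Fin 4 → ℕ} :
    Balance (L + U) p i Γ ↔ IsQuiet L p ∧ (L p).c + (U p).c = Pi.single i 1 ∧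
      Γ = (L p).b + (U p).b + Pi.single i (en p * τ.toNat) := by
  simp only [Balance, pending_add_iff hU, and_assoc, exists_and_left, exists_eq_left,
    Pi.add_apply, Level.c_add, Level.b_add]

theorem pending_succ_iff (hL : ∃ k ≤ m, L k ≠ 0) {v : ℕ} :
    Pending L (m + 1) v ↔ (L (m + 1)).tok = 0 ∧ ∃ a, (L (m + 1)).q = Pi.single a 1 ∧
      ∃ Γ, Balance L m a Γ ∧ Phase (en m) a Γ v := by
  constructor
  · rintro (h | ⟨h, htok, hq, hc, hv⟩)
    · obtain ⟨k, hk, hLk⟩ := hL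
      exact absurd (h.eq_zero k (Nat.lt_succ_of_le hk)) hLk
    · exact ⟨htok, _, hq, _, ⟨_, h, hc, rfl⟩, hv⟩
  · rintro ⟨htok, a, hq, _, ⟨w, h, hc, rfl⟩, hv⟩
    exact .step h htok hq hc hv

theorem balance_congr_of_le {L' : ℕ → Level} (hL : ∃ k ≤ p, L k ≠ 0)
    (hL' : ∃ k ≤ p, L' k ≠ 0) (hlt : ∀ k, p < k → L k = L' k)
    (hp : ∀ i Γ, Balance L p i Γ ↔ Balance L' p i Γ) (hpm : p ≤ m) (i : Fin 4)
    (Γ : Fin 4 → ℕ) : Balance L m i Γ ↔ Balance L' m i Γ := by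
  induction m, hpm using Nat.le_induction generalizing i Γ with
  | base => exact hp i Γ
  | succ m hpm ih =>
    have hLm := hL.imp fun _ => And.imp_left fun hk => hk.trans hpm
    have hLm' := hL'.imp fun _ => And.imp_left fun hk => hk.trans hpm
    rw [Balance, Balance]
    simp only [pending_succ_iff hLm, pending_succ_iff hLm', ih,
      hlt (m + 1) (Nat.lt_succ_of_le hpm)]

theorem pending_succ_add_iff (hU : HasTok U p τ) {a : Fin 4} (htok : (U (p + 1)).tok = 0)
    (hq : (U (p + 1)).q = Pi.single a 1) {v : ℕ} :
    Pending (L + U) (p + 1) v ↔ (IsQuiet L p ∧ (L (p + 1)).tok = 0 ∧ (L (p + 1)).q = 0) ∧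
      (L p).c + (U p).c = Pi.single a 1 ∧
      Phase (en p) a ((L p).b + (U p).b + Pi.single a (en p * τ.toNat)) v := by
  simp only [pending_succ_iff ⟨p, le_rfl, hU.add_left_ne_zero L⟩, balance_add_iff hU, Pi.add_apply,
    Level.tok_add, Level.q_add, htok, hq, add_zero, add_single_eq_single_iff]
  constructor
  · rintro ⟨ht, _, ⟨hq, rfl⟩, _, ⟨hL, hc, rfl⟩, hv⟩
    exact ⟨⟨hL, ht, hq⟩, hc, hv⟩
  · rintro ⟨⟨hL, ht, hq⟩, hc, hv⟩
    exact ⟨ht, a, ⟨hq, rfl⟩, _, ⟨hL, hc, rfl⟩, hv⟩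

end Runs

theorem eq_zero_iff_forall_fin_four {γ : Fin 4 → ℕ} :
    γ = 0 ↔ γ 0 = 0 ∧ γ 1 = 0 ∧ γ 2 = 0 ∧ γ 3 = 0 := by
  simp [funext_iff, Fin.forall_fin_succ]

namespace Phase

variable {E v : ℕ} {a : Fin 4} {γ : Fin 4 → ℕ}

theorem zero_add_single_iff : Phase E 0 (γ + Pi.single 0 E) v ↔ γ = 0 ∧ v = E * E := by
  rw [eq_zero_iff_forall_fin_four]
  grind [Phase, Pi.add_apply]

theorem one_add_single_iff_zero : Phase E 1 (γ + Pi.single 1 E) v ↔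
    Phase E 0 (γ + Pi.single 0 1) v := by
  grind [Phase, Pi.add_apply]

theorem two_iff_one : Phase E 2 γ v ↔ Phase E 1 γ v := by
  simp [Phase]

theorem two_add_single_iff_one : Phase E 2 (γ + Pi.single 0 1 + Pi.single 2 E) v ↔
    Phase E 1 (γ + Pi.single 3 1 + Pi.single 1 E) v := by
  grind [Phase, Pi.add_apply]

theorem three_add_single_iff_two : Phase E 3 (γ + Pi.single 3 1) v ↔
    Phase E 2 (γ + Pi.single 2 E) v := by
  grind [Phase, Pi.add_apply]

theorem three_add_single_iff : Phase E 3 (γ + Pi.single 3 E) v ↔ γ = 0 ∧ v = 0 := by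
  rw [eq_zero_iff_forall_fin_four]
  grind [Phase, Pi.add_apply]

theorem add_single_two_iff : Phase E a (γ + Pi.single 2 1) v ↔
    Phase E a (γ + Pi.single 1 1) (v + 1) := by
  grind [Phase, Pi.add_apply]

theorem pos_of_add_single_one (h : Phase E a (γ + Pi.single 1 1) v) : 0 < v := by
  grind [Phase, Pi.add_apply]

end Phase

/-- The configurations consisting of the single variable `s_p` or `f_p`. -/
def tokAt (τ : Bool) (p : ℕ) : ℕ → Level := Pi.single p ⟨Pi.single τ 1, 0, 0, 0⟩

/-- The configuration consisting of the single variable `q_{jp}`. -/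
def qAt (j : Fin 4) (p : ℕ) : ℕ → Level := Pi.single p ⟨0, Pi.single j 1, 0, 0⟩

/-- The configuration consisting of the single variable `c_{jp}`. -/
def cAt (j : Fin 4) (p : ℕ) : ℕ → Level := Pi.single p ⟨0, 0, Pi.single j 1, 0⟩

/-- The configuration consisting of the variables `b_{jp}` with exponents `β`. -/
def bAt (β : Fin 4 → ℕ) (p : ℕ) : ℕ → Level := Pi.single p ⟨0, 0, 0, β⟩

/-- The state `q_a` of a run of level `p + 1` during which a run of level `p` acts on `c_{ap}`;
the variables `b_{jp}` have exponents `β`. -/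
def run (p : ℕ) (a : Fin 4) (τ : Bool) (β : Fin 4 → ℕ) : ℕ → Level :=
  qAt a (p + 1) + bAt β p + cAt a p + tokAt τ p

/-- The monomials of the rule that, in the state `q_a` of a run of level `p + 1`, increments the
exponent of `b_{j(p+1)}`; `β` and `β'` are the exponents of the `b_{ip}` and `b_{i(p+1)}`. -/
def incr (p : ℕ) (a j : Fin 4) (β β' : Fin 4 → ℕ) : ℕ → Level :=
  qAt a (p + 1) + bAt β p + bAt β' (p + 1) + cAt j (p + 1) + tokAt false p

/-- Both sides of a rule: `U` and `V` carry a token, and replacing one by the other does not change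
the outcome of a run of level `n`. -/
structure Interchangeable (n : ℕ) (U V : ℕ → Level) : Prop where
  left : ∃ p τ, HasTok U p τ
  right : ∃ p τ, HasTok V p τ
  balance_iff : ∀ L i Γ, Balance (L + U) n i Γ ↔ Balance (L + V) n i Γ

section Rules

variable {n p : ℕ} {a a' : Fin 4} {τ τ' : Bool} {β β' : Fin 4 → ℕ}

theorem run_apply_self : run p a τ β p = ⟨Pi.single τ 1, 0, Pi.single a 1, β⟩ := by
  simp [run, tokAt, qAt, cAt, bAt, Level.ext_iff]

theorem run_apply_succ : run p a τ β (p + 1) = ⟨0, Pi.single a 1, 0, 0⟩ := by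
  simp [run, tokAt, qAt, cAt, bAt]

theorem run_apply_of_ne {k : ℕ} (hk : k ≠ p) (hk' : k ≠ p + 1) : run p a τ β k = 0 := by
  simp [run, tokAt, qAt, cAt, bAt, hk, hk']

theorem tokAt_apply_self : tokAt τ p p = ⟨Pi.single τ 1, 0, 0, 0⟩ := Pi.single_eq_same ..

theorem hasTok_tokAt : HasTok (tokAt τ p) p τ := by
  constructor <;> simp +contextual [tokAt, ne_of_lt]

theorem hasTok_run : HasTok (run p a τ β) p τ where
  eq_zero k hk := run_apply_of_ne (by omega) (by omega)
  tok := by rw [run_apply_self]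
  q := by rw [run_apply_self]

theorem pending_add_run_iff {L : ℕ → Level} {v : ℕ} :
    Pending (L + run p a τ β) (p + 1) v ↔
      (IsQuiet L p ∧ (L (p + 1)).tok = 0 ∧ (L (p + 1)).q = 0) ∧ (L p).c = 0 ∧
        Phase (en p) a ((L p).b + β + Pi.single a (en p * τ.toNat)) v := by
  simp only [pending_succ_add_iff hasTok_run (congrArg Level.tok run_apply_succ)
    (congrArg Level.q run_apply_succ), run_apply_self, add_single_eq_single_iff, and_true]

theorem Interchangeable.of_balance_iff {U V : ℕ → Level} (hpn : p ≤ n)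
    (hU : ∃ k ≤ p, ∃ τ, HasTok U k τ) (hV : ∃ k ≤ p, ∃ τ, HasTok V k τ)
    (hlt : ∀ k, p < k → U k = V k)
    (h : ∀ L i Γ, Balance (L + U) p i Γ ↔ Balance (L + V) p i Γ) : Interchangeable n U V := by
  obtain ⟨k, hk, τ, hU⟩ := hU
  obtain ⟨k', hk', τ', hV⟩ := hV
  refine ⟨⟨k, τ, hU⟩, ⟨k', τ', hV⟩, fun L => ?_⟩
  refine balance_congr_of_le ⟨k, hk, hU.add_left_ne_zero L⟩ ⟨k', hk', hV.add_left_ne_zero L⟩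
    (fun j hj => ?_) (h L) hpn
  rw [Pi.add_apply, Pi.add_apply, hlt j hj]

theorem interchangeable_run_run (hpn : p + 1 ≤ n)
    (h : ∀ γ v, Phase (en p) a (γ + β + Pi.single a (en p * τ.toNat)) v ↔
      Phase (en p) a' (γ + β' + Pi.single a' (en p * τ'.toNat)) v) :
    Interchangeable n (run p a τ β) (run p a' τ' β') := by
  refine .of_balance_iff hpn ⟨p, p.le_succ, _, hasTok_run⟩ ⟨p, p.le_succ, _, hasTok_run⟩
    (fun k hk => ?_) fun L i Γ => ?_
  · rw [run_apply_of_ne (by omega) (by omega), run_apply_of_ne (by omega) (by omega)]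
  · simp only [Balance, pending_add_run_iff, h, Pi.add_apply, run_apply_succ, Level.c_add,
      Level.b_add]

theorem isQuiet_succ_iff {L : ℕ → Level} :
    IsQuiet L (p + 1) ↔ (IsQuiet L p ∧ (L (p + 1)).tok = 0 ∧ (L (p + 1)).q = 0) ∧
      (L p).c = 0 ∧ (L p).b = 0 := by
  constructor
  · rintro ⟨h, htok, hq⟩
    have hp := h p p.lt_succ_self
    exact ⟨⟨⟨fun k hk => h k (hk.trans p.lt_succ_self), by rw [hp, Level.tok_zero],
      by rw [hp, Level.q_zero]⟩, htok, hq⟩, by rw [hp, Level.c_zero], by rw [hp, Level.b_zero]⟩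
  · rintro ⟨⟨hL, htok, hq⟩, hc, hb⟩
    refine ⟨fun k hk => ?_, htok, hq⟩
    rcases Nat.lt_succ_iff_lt_or_eq.1 hk with hk | rfl
    · exact hL.eq_zero k hk
    · exact Level.ext hL.tok hL.q hc hb

theorem interchangeable_run_tokAt (hpn : p + 1 ≤ n)
    (h : ∀ γ v, Phase (en p) a (γ + β + Pi.single a (en p * τ.toNat)) v ↔
      γ = 0 ∧ v = en (p + 1) * τ'.toNat) :
    Interchangeable n (run p a τ β) (tokAt τ' (p + 1)) := by
  refine .of_balance_iff hpn ⟨p, p.le_succ, _, hasTok_run⟩ ⟨p + 1, le_rfl, _, hasTok_tokAt⟩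
    (fun k hk => ?_) fun L i Γ => ?_
  · rw [run_apply_of_ne (by omega) (by omega), tokAt, Pi.single_eq_of_ne (by omega)]
  · simp only [Balance, pending_add_run_iff, h, pending_add_iff hasTok_tokAt, isQuiet_succ_iff,
      Pi.add_apply, run_apply_succ, tokAt_apply_self, Level.c_add, Level.b_add, and_assoc]

theorem interchangeable_start (j : Fin 4) : Interchangeable n
    (bAt (Pi.single j 2) 0 + cAt j 0 + tokAt false 0) (cAt j 0 + tokAt true 0) := by
  have hU : HasTok (bAt (Pi.single j 2) 0 + cAt j 0 + tokAt false 0) 0 false :=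
    ⟨by simp, by simp [bAt, cAt, tokAt], by simp [bAt, cAt, tokAt]⟩
  have hV : HasTok (cAt j 0 + tokAt true 0) 0 true :=
    ⟨by simp, by simp [cAt, tokAt], by simp [cAt, tokAt]⟩
  refine .of_balance_iff n.zero_le ⟨0, le_rfl, _, hU⟩ ⟨0, le_rfl, _, hV⟩ (fun k hk => ?_)
    fun L i Γ => ?_
  · simp [bAt, cAt, tokAt, hk.ne']
  · rw [balance_add_iff hU, balance_add_iff hV]
    simp +contextual [bAt, cAt, tokAt, add_single_eq_single_iff, en]

theorem incr_apply_self {j : Fin 4} :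
    incr p a j β β' p = ⟨Pi.single false 1, 0, 0, β⟩ := by
  simp [incr, tokAt, qAt, cAt, bAt, Level.ext_iff]

theorem incr_apply_succ {j : Fin 4} :
    incr p a j β β' (p + 1) = ⟨0, Pi.single a 1, Pi.single j 1, β'⟩ := by
  simp [incr, tokAt, qAt, cAt, bAt, Level.ext_iff]

theorem incr_apply_of_ne {j : Fin 4} {k : ℕ} (hk : k ≠ p) (hk' : k ≠ p + 1) :
    incr p a j β β' k = 0 := by
  simp [incr, tokAt, qAt, cAt, bAt, hk, hk']

theorem hasTok_incr {j : Fin 4} : HasTok (incr p a j β β') p false where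
  eq_zero k hk := incr_apply_of_ne (by omega) (by omega)
  tok := by rw [incr_apply_self]
  q := by rw [incr_apply_self]

theorem balance_add_incr_iff {L : ℕ → Level} {i j : Fin 4} {Γ : Fin 4 → ℕ} :
    Balance (L + incr p a j β β') (p + 1) i Γ ↔
      ((IsQuiet L p ∧ (L (p + 1)).tok = 0 ∧ (L (p + 1)).q = 0) ∧ (L p).c = Pi.single a 1 ∧
        (L (p + 1)).c = 0 ∧ j = i) ∧
      ∃ v, Phase (en p) a ((L p).b + β) v ∧ Γ = (L (p + 1)).b + β' + Pi.single i v := by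
  rw [Balance]
  simp only [pending_succ_add_iff hasTok_incr (congrArg Level.tok incr_apply_succ)
    (congrArg Level.q incr_apply_succ), incr_apply_self, incr_apply_succ, Pi.add_apply,
    Level.c_add, Level.b_add, add_single_eq_single_iff, Bool.toNat_false, mul_zero,
    Pi.single_zero, add_zero]
  tauto

theorem interchangeable_incr (hpn : p + 1 ≤ n) (a j : Fin 4) :
    Interchangeable n (incr p a j (Pi.single 2 1) (Pi.single j 1))
      (incr p a j (Pi.single 1 1) 0) := by
  refine .of_balance_iff hpn ⟨p, p.le_succ, _, hasTok_incr⟩ ⟨p, p.le_succ, _, hasTok_incr⟩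
    (fun k hk => ?_) fun L i Γ => ?_
  · rw [incr_apply_of_ne (by omega) (by omega), incr_apply_of_ne (by omega) (by omega)]
  · rw [balance_add_incr_iff, balance_add_incr_iff]
    refine and_congr_right fun ⟨_, _, _, hij⟩ => ?_
    subst hij
    constructor
    · rintro ⟨v, hv, rfl⟩
      refine ⟨v + 1, Phase.add_single_two_iff.1 hv, ?_⟩
      rw [add_zero, Pi.single_add, add_assoc, add_comm (Pi.single j 1)]
    · rintro ⟨v, hv, rfl⟩
      obtain ⟨v, rfl⟩ := Nat.exists_eq_add_of_lt hv.pos_of_add_single_one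
      rw [zero_add] at hv ⊢
      refine ⟨v, Phase.add_single_two_iff.2 hv, ?_⟩
      rw [add_zero, Pi.single_add, add_assoc, add_comm (Pi.single j 1)]

end Rules

/-- The configuration formed by the unbarred (`bar = false`) or barred (`bar = true`) variables of
a monomial; the levels above `n` are zero. -/
def levels {n : ℕ} (bar : Bool) : Mon (MVar n) →+ (ℕ → Level) where
  toFun M k :=
    if h : k < n + 1 then
      ⟨fun τ => cond τ (M (vS bar ⟨k, h⟩)) (M (vF bar ⟨k, h⟩)), fun j => M (vQ bar j ⟨k, h⟩),
        fun j => M (vC bar j ⟨k, h⟩), fun j => M (vB bar j ⟨k, h⟩)⟩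
    else 0
  map_zero' := by
    funext k
    split_ifs
    · ext τ <;> [cases τ; skip; skip; skip] <;> rfl
    · rfl
  map_add' M N := by
    funext k
    rw [Pi.add_apply]
    split_ifs
    · ext τ <;> [cases τ; skip; skip; skip] <;> rfl
    · rw [add_zero]

/-- The variables of `X` belonging to no level. -/
def specialVars (n : ℕ) : Set (MVar n) := {vs, vl, vc, vcb, vb, vbb}

/-- `p` is the monomial in the variables of `V_0, …, V_n` (barred if `bar = true`) that corresponds
to the configuration `U`. -/
def IsLift {n : ℕ} (bar : Bool) (p : MPoly n) (U : ℕ → Level) : Prop :=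
  ∃ u : Mon (MVar n), p = monomial u 1 ∧ levels bar u = U ∧ levels (!bar) u = 0 ∧
    ∀ x ∈ specialVars n, u x = 0

section Lift

variable {n : ℕ} {bar : Bool}

theorem levels_apply (M : Mon (MVar n)) (i : Fin (n + 1)) :
    levels bar M i = ⟨fun τ => cond τ (M (vS bar i)) (M (vF bar i)), fun j => M (vQ bar j i),
      fun j => M (vC bar j i), fun j => M (vB bar j i)⟩ :=
  dif_pos i.isLt

theorem levels_apply_of_lt (M : Mon (MVar n)) {k : ℕ} (hk : n < k) : levels bar M k = 0 :=
  dif_neg (by omega)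

theorem levels_ext {M : Mon (MVar n)} {i : Fin (n + 1)} {U : Level} (hi : levels bar M i = U)
    (h : ∀ k : Fin (n + 1), k ≠ i → levels bar M k = 0) : levels bar M = Pi.single ↑i U := by
  funext k
  rcases lt_or_ge n k with hk | hk
  · rw [levels_apply_of_lt M hk, Pi.single_eq_of_ne (by omega)]
  rcases eq_or_ne k i with rfl | hki
  · rw [hi, Pi.single_eq_same]
  · rw [Pi.single_eq_of_ne hki]
    exact h ⟨k, Nat.lt_succ_of_le hk⟩ fun hk' => hki (congrArg Fin.val hk')

theorem levels_eq_zero {M : Mon (MVar n)} (h : ∀ k : Fin (n + 1), levels bar M k = 0) :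
    levels bar M = 0 := by
  rw [levels_ext (h 0) fun k _ => h k, Pi.single_zero]

theorem isLift_X_vS (i : Fin (n + 1)) : IsLift bar (X (vS bar i)) (tokAt true i) := by
  refine ⟨.single _ 1, rfl, levels_ext ?_ fun k hk => ?_, levels_eq_zero fun k => ?_, ?_⟩
  · ext τ <;> [cases τ; skip; skip; skip] <;> simp [levels_apply]
  · ext τ <;> [cases τ; skip; skip; skip] <;> simp [levels_apply, hk.symm]
  · ext τ <;> [cases τ; skip; skip; skip] <;> simp [levels_apply]
  · simp [specialVars]

theorem isLift_X_vF (i : Fin (n + 1)) : IsLift bar (X (vF bar i)) (tokAt false i) := by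
  refine ⟨.single _ 1, rfl, levels_ext ?_ fun k hk => ?_, levels_eq_zero fun k => ?_, ?_⟩
  · ext τ <;> [cases τ; skip; skip; skip] <;> simp [levels_apply]
  · ext τ <;> [cases τ; skip; skip; skip] <;> simp [levels_apply, hk.symm]
  · ext τ <;> [cases τ; skip; skip; skip] <;> simp [levels_apply]
  · simp [specialVars]

theorem isLift_X_vQ (j : Fin 4) (i : Fin (n + 1)) : IsLift bar (X (vQ bar j i)) (qAt j i) := by
  refine ⟨.single _ 1, rfl, levels_ext ?_ fun k hk => ?_, levels_eq_zero fun k => ?_, ?_⟩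
  · ext a <;> simp [levels_apply, Finsupp.single_apply, Pi.single_apply, eq_comm]
  · ext a <;> simp [levels_apply, hk.symm]
  · ext a <;> simp [levels_apply]
  · simp [specialVars]

theorem isLift_X_vC (j : Fin 4) (i : Fin (n + 1)) : IsLift bar (X (vC bar j i)) (cAt j i) := by
  refine ⟨.single _ 1, rfl, levels_ext ?_ fun k hk => ?_, levels_eq_zero fun k => ?_, ?_⟩
  · ext a <;> simp [levels_apply, Finsupp.single_apply, Pi.single_apply, eq_comm]
  · ext a <;> simp [levels_apply, hk.symm]
  · ext a <;> simp [levels_apply]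
  · simp [specialVars]

theorem isLift_X_vB_pow (j : Fin 4) (i : Fin (n + 1)) (k : ℕ) :
    IsLift bar (X (vB bar j i) ^ k) (bAt (Pi.single j k) i) := by
  refine ⟨.single _ k, X_pow_eq_monomial, levels_ext ?_ fun k hk => ?_, levels_eq_zero fun k => ?_,
    ?_⟩
  · ext a <;> simp [levels_apply, Finsupp.single_apply, Pi.single_apply, eq_comm]
  · ext a <;> simp [levels_apply, hk.symm]
  · ext a <;> simp [levels_apply]
  · simp [specialVars]

theorem isLift_X_vB (j : Fin 4) (i : Fin (n + 1)) :
    IsLift bar (X (vB bar j i)) (bAt (Pi.single j 1) i) := by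
  simpa only [pow_one] using isLift_X_vB_pow j i 1

theorem IsLift.mul {p q : MPoly n} {U V : ℕ → Level} (hp : IsLift bar p U) (hq : IsLift bar q V) :
    IsLift bar (p * q) (U + V) := by
  obtain ⟨u, rfl, hu, hu', hus⟩ := hp
  obtain ⟨v, rfl, hv, hv', hvs⟩ := hq
  refine ⟨u + v, by rw [monomial_mul, one_mul], by rw [map_add, hu, hv],
    by rw [map_add, hu', hv', add_zero], fun x hx => ?_⟩
  rw [Finsupp.add_apply, hus x hx, hvs x hx]

theorem bAt_zero (p : ℕ) : bAt 0 p = 0 := Pi.single_zero p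

theorem isLift_run {i : Fin n} {τ : Bool} {t : MPoly n} (ht : IsLift bar t (tokAt τ i.castSucc))
    (a : Fin 4) : IsLift bar (X (vQ bar a i.succ) * X (vC bar a i.castSucc) * t) (run i a τ 0) := by
  rw [run, bAt_zero, add_zero]
  exact ((isLift_X_vQ a i.succ).mul (isLift_X_vC a i.castSucc)).mul ht

theorem isLift_run_single {i : Fin n} {τ : Bool} {t : MPoly n}
    (ht : IsLift bar t (tokAt τ i.castSucc)) (a j : Fin 4) :
    IsLift bar (X (vQ bar a i.succ) * X (vB bar j i.castSucc) * X (vC bar a i.castSucc) * t)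
      (run i a τ (Pi.single j 1)) :=
  (((isLift_X_vQ a i.succ).mul (isLift_X_vB j i.castSucc)).mul (isLift_X_vC a i.castSucc)).mul ht

/-- The two terms of `p` are the two sides of a rule on the unbarred or barred variables. -/
def IsRule {n : ℕ} (bar : Bool) (p : MPoly n) : Prop :=
  ∃ q r U V, p = q + r ∧ IsLift bar q U ∧ IsLift bar r V ∧ Interchangeable n U V

theorem isRule_of_mem_P0 {p : MPoly n} (hp : p ∈ P0 n bar) : IsRule bar p := by
  obtain ⟨j, rfl⟩ := hp
  exact ⟨_, _, _, _, rfl, ((isLift_X_vB_pow j 0 2).mul (isLift_X_vC j 0)).mul (isLift_X_vF 0),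
    (isLift_X_vC j 0).mul (isLift_X_vS 0), interchangeable_start j⟩

theorem isRule_of_mem_Pm {p : MPoly n} {i : Fin n} (hp : p ∈ Pm n bar i) : IsRule bar p := by
  have hin : (i : ℕ) + 1 ≤ n := i.isLt
  have hs := isLift_X_vS (bar := bar) i.castSucc
  have hf := isLift_X_vF (bar := bar) i.castSucc
  rcases hp with (rfl | rfl | rfl | rfl | rfl | rfl) | ⟨j, rfl⟩
  · refine ⟨_, _, _, _, rfl, isLift_run hs 0, isLift_X_vS i.succ,
      interchangeable_run_tokAt hin fun γ v => ?_⟩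
    simpa [en_succ] using Phase.zero_add_single_iff
  · refine ⟨_, _, _, _, rfl, isLift_run hs 1, isLift_run_single hf 0 0,
      interchangeable_run_run hin fun γ v => ?_⟩
    simpa using Phase.one_add_single_iff_zero
  · refine ⟨_, _, _, _, rfl, isLift_run hf 2, isLift_run hf 1,
      interchangeable_run_run hin fun γ v => ?_⟩
    simpa using Phase.two_iff_one
  · refine ⟨_, _, _, _, rfl, isLift_run_single hs 2 0, isLift_run_single hs 1 3,
      interchangeable_run_run hin fun γ v => ?_⟩
    simpa using Phase.two_add_single_iff_one
  · refine ⟨_, _, _, _, rfl, isLift_run_single hf 3 3, isLift_run hs 2,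
      interchangeable_run_run hin fun γ v => ?_⟩
    simpa using Phase.three_add_single_iff_two
  · refine ⟨_, _, _, _, rfl, isLift_run hs 3, isLift_X_vF i.succ,
      interchangeable_run_tokAt hin fun γ v => ?_⟩
    simpa using Phase.three_add_single_iff
  · refine ⟨_, _, _, _, rfl, ?_, ?_, interchangeable_incr hin 1 j⟩
    · exact ((((isLift_X_vQ 1 i.succ).mul (isLift_X_vB 2 i.castSucc)).mul
        (isLift_X_vB j i.succ)).mul (isLift_X_vC j i.succ)).mul hf
    · rw [incr, bAt_zero, add_zero]
      exact (((isLift_X_vQ 1 i.succ).mul (isLift_X_vB 1 i.castSucc)).mul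
        (isLift_X_vC j i.succ)).mul hf

theorem isRule_of_mem_PP {p : MPoly n} (hp : p ∈ PP n bar) : IsRule bar p := by
  rcases hp with hp | hp
  · exact isRule_of_mem_P0 hp
  · obtain ⟨i, hp⟩ := Set.mem_iUnion.1 hp
    exact isRule_of_mem_Pm hp

end Lift

/-- The monomials without `s` and without barred variables of the levels, in which `c` and `b`
together have exponent `m₂`, and `c̄` and `b̄` together have exponent `m₁`. -/
def counterClass (n m₁ m₂ : ℕ) : Set (Mon (MVar n)) :=
  {M | levels true M = 0 ∧ M vs = 0 ∧ M vc + M vb = m₂ ∧ M vcb + M vbb = m₁}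

/-- A saturated set containing `ℓ c̄^{m₁} c^{m₂}` when `m₁ + m₂ < en n`: either `ℓ` is present and
every `b` or `b̄` has been paid for by one factor `b_{4n}`, or `ℓ` has been replaced by an
intermediate state of a run of level `n` that ends with as many factors `b_{4n}`. -/
def ellClass (n m₁ m₂ : ℕ) : Set (Mon (MVar n)) :=
  {M | M ∈ counterClass n m₁ m₂ ∧
    (M vl = 1 ∧ levels false M = bAt (Pi.single 3 (M vb + M vbb)) n ∨
      M vl = 0 ∧ Balance (levels false M) n 3 (Pi.single 3 (M vb + M vbb)))}

section EllClass

variable {n m₁ m₂ : ℕ}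

theorem forall_mem_specialVars {P : MVar n → Prop} :
    (∀ x ∈ specialVars n, P x) ↔ P vs ∧ P vl ∧ P vc ∧ P vcb ∧ P vb ∧ P vbb := by
  simp [specialVars]

theorem levels_single_of_mem_specialVars (bar : Bool) (k : ℕ) :
    ∀ x ∈ specialVars n, levels bar (.single x k) = 0 := by
  refine fun x hx => levels_eq_zero fun i => ?_
  rw [levels_apply]
  rcases hx with rfl | rfl | rfl | rfl | rfl | rfl <;>
    (ext τ <;> [cases τ; skip; skip; skip] <;> simp)

theorem ell_mem_ellClass :
    .single vl 1 + .single vcb m₁ + .single vc m₂ ∈ ellClass n m₁ m₂ := by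
  have h := fun bar k => forall_mem_specialVars.1 (levels_single_of_mem_specialVars (n := n) bar k)
  simp [ellClass, counterClass, h, bAt_zero]

theorem add_single_vl_mem_ellClass_iff {t : Mon (MVar n)} :
    t + .single vl 1 ∈ ellClass n m₁ m₂ ↔ t ∈ counterClass n m₁ m₂ ∧ t vl = 0 ∧
      levels false t = bAt (Pi.single 3 (t vb + t vbb)) n := by
  have h := fun bar => forall_mem_specialVars.1 (levels_single_of_mem_specialVars (n := n) bar 1)
  simp [ellClass, counterClass, h]

theorem IsLift.exists_add_mem_ellClass_iff {p : MPoly n} {U : ℕ → Level} {k : ℕ} {τ : Bool}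
    (hp : IsLift false p U) (hU : HasTok U k τ) :
    ∃ u, p = monomial u 1 ∧ ∀ t, t + u ∈ ellClass n m₁ m₂ ↔ t ∈ counterClass n m₁ m₂ ∧
      t vl = 0 ∧ Balance (levels false t + U) n 3 (Pi.single 3 (t vb + t vbb)) := by
  obtain ⟨u, rfl, rfl, hu, hus⟩ := hp
  refine ⟨u, rfl, fun t => ?_⟩
  have htok : ∀ β, levels false t + levels false u ≠ bAt β n := fun β h => by
    have := congrArg (fun L => (L k).tok τ) h
    rcases eq_or_ne k n with rfl | hkn
    · simp [hU.tok, bAt] at this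
    · simp [hU.tok, bAt, hkn] at this
  rw [Bool.not_false] at hu
  simp [ellClass, counterClass, hu, forall_mem_specialVars.1 hus, htok]

theorem IsLift.avoids_ellClass {p : MPoly n} {U : ℕ → Level} {k : ℕ} (hp : IsLift true p U)
    (hU : U k ≠ 0) : Avoids (ellClass n m₁ m₂) p := by
  obtain ⟨u, rfl, rfl, -⟩ := hp
  refine ⟨u, rfl, fun t ht => hU ?_⟩
  have h := congrFun ht.1.1 k
  rw [map_add] at h
  exact (Level.add_eq_zero_iff.1 h).2

theorem avoids_ellClass_vs : Avoids (ellClass n m₁ m₂) (X vs : MPoly n) :=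
  ⟨.single vs 1, rfl, fun t ht => by simpa using ht.1.2.1⟩

theorem respects_ellClass_of_isRule_true {p : MPoly n} (hp : IsRule true p) :
    Respects (ellClass n m₁ m₂) p := by
  obtain ⟨q, r, U, V, rfl, hq, hr, hUV⟩ := hp
  obtain ⟨k, τ, hU⟩ := hUV.left
  obtain ⟨k', τ', hV⟩ := hUV.right
  exact (hq.avoids_ellClass hU.ne_zero).respects_add (hr.avoids_ellClass hV.ne_zero)

theorem respects_ellClass_of_isRule_false {p : MPoly n} (hp : IsRule false p) :
    Respects (ellClass n m₁ m₂) p := by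
  obtain ⟨q, r, U, V, rfl, hq, hr, hUV⟩ := hp
  obtain ⟨k, τ, hU⟩ := hUV.left
  obtain ⟨k', τ', hV⟩ := hUV.right
  obtain ⟨u, rfl, hu⟩ := hq.exists_add_mem_ellClass_iff hU
  obtain ⟨v, rfl, hv⟩ := hr.exists_add_mem_ellClass_iff hV
  exact respects_add fun t => by rw [hu, hv, hUV.balance_iff]

theorem hasTok_cAt_add_tokAt (i : Fin 4) (τ : Bool) : HasTok (cAt i n + tokAt τ n) n τ := by
  constructor <;> simp +contextual [cAt, tokAt, ne_of_lt]

theorem balance_add_cAt_add_tokAt_iff {L : ℕ → Level} {i : Fin 4} {τ : Bool}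
    {Γ : Fin 4 → ℕ} : Balance (L + (cAt i n + tokAt τ n)) n i Γ ↔
      IsQuiet L n ∧ (L n).c = 0 ∧ Γ = (L n).b + Pi.single i (en n * τ.toNat) := by
  rw [balance_add_iff (hasTok_cAt_add_tokAt i τ)]
  simp [cAt, tokAt]

theorem isLift_vC_mul_vS (bar : Bool) (j : Fin 4) (i : Fin (n + 1)) :
    IsLift bar (X (vC bar j i) * X (vS bar i)) (cAt j i + tokAt true i) :=
  (isLift_X_vC j i).mul (isLift_X_vS i)

theorem isLift_vC_mul_vF (bar : Bool) (j : Fin 4) (i : Fin (n + 1)) :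
    IsLift bar (X (vC bar j i) * X (vF bar i)) (cAt j i + tokAt false i) :=
  (isLift_X_vC j i).mul (isLift_X_vF i)

theorem levels_eq_bAt_iff {t : Mon (MVar n)} {bar : Bool} {β : Fin 4 → ℕ} :
    levels bar t = bAt β n ↔
      IsQuiet (levels bar t) n ∧ (levels bar t n).c = 0 ∧ β = (levels bar t n).b := by
  constructor
  · intro h
    rw [h]
    exact ⟨⟨fun k hk => Pi.single_eq_of_ne hk.ne _, by simp [bAt], by simp [bAt]⟩, by simp [bAt],
      by simp [bAt]⟩
  · rintro ⟨h, hc, rfl⟩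
    funext k
    rcases lt_trichotomy k n with hk | rfl | hk
    · rw [h.eq_zero k hk, bAt, Pi.single_eq_of_ne hk.ne]
    · rw [bAt, Pi.single_eq_same]
      exact Level.ext h.tok h.q hc rfl
    · rw [levels_apply_of_lt t hk, bAt, Pi.single_eq_of_ne hk.ne']

theorem respects_ellClass_vl : Respects (ellClass n m₁ m₂)
    (X (vC false 3 (Fin.last n)) * X (vF false (Fin.last n)) + X vl : MPoly n) := by
  obtain ⟨u, hu, hmem⟩ := (isLift_vC_mul_vF false 3 (Fin.last n)).exists_add_mem_ellClass_iff
    (m₁ := m₁) (m₂ := m₂) (hasTok_cAt_add_tokAt 3 false)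
  rw [hu]
  refine respects_add fun t => ?_
  rw [hmem, add_single_vl_mem_ellClass_iff, Fin.val_last, balance_add_cAt_add_tokAt_iff,
    levels_eq_bAt_iff, Bool.toNat_false, mul_zero, Pi.single_zero, add_zero]

-- A run starting in `s_n` produces `en n` factors `b_{4n}`, which `b` and `b̄` cannot pay for.
theorem avoids_ellClass_vC_mul_vS (hm : m₁ + m₂ < en n) : Avoids (ellClass n m₁ m₂)
    (X (vC false 3 (Fin.last n)) * X (vS false (Fin.last n)) : MPoly n) := by
  obtain ⟨u, hu, hmem⟩ := (isLift_vC_mul_vS false 3 (Fin.last n)).exists_add_mem_ellClass_iff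
    (m₁ := m₁) (m₂ := m₂) (hasTok_cAt_add_tokAt 3 true)
  refine ⟨u, hu, fun t => ?_⟩
  rw [hmem, Fin.val_last, balance_add_cAt_add_tokAt_iff]
  rintro ⟨⟨-, -, hc, hcb⟩, -, -, -, hΓ⟩
  have h := congrFun hΓ 3
  rw [Pi.add_apply, Pi.single_eq_same, Pi.single_eq_same, Bool.toNat_true, mul_one] at h
  omega

theorem bAt_add (β β' : Fin 4 → ℕ) (p : ℕ) : bAt (β + β') p = bAt β p + bAt β' p := by
  rw [bAt, bAt, bAt, ← Pi.single_add]
  exact congrArg _ (Level.ext rfl rfl rfl rfl)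

theorem respects_ellClass_of_counterClass {y z : MVar n} (hy : y = vb ∨ y = vbb)
    (hz : z = vc ∨ z = vcb)
    (h : ∀ t, t + .single y 1 ∈ counterClass n m₁ m₂ ↔ t + .single z 1 ∈ counterClass n m₁ m₂) :
    Respects (ellClass n m₁ m₂)
      (X (vB false 3 (Fin.last n)) * X vl * X y + X vl * X z : MPoly n) := by
  obtain ⟨u, hu, huf, hut, hus⟩ := isLift_X_vB (bar := false) 3 (Fin.last n)
  rw [Bool.not_false] at hut
  have hys : y ∈ specialVars n := by rcases hy with rfl | rfl <;> simp [specialVars]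
  have hzs : z ∈ specialVars n := by rcases hz with rfl | rfl <;> simp [specialVars]
  have hcount (t) : t + u + .single y 1 ∈ counterClass n m₁ m₂ ↔
      t + .single z 1 ∈ counterClass n m₁ m₂ := by
    rw [← h]
    simp [counterClass, hut, forall_mem_specialVars.1 hus]
  have hvl (t : Mon (MVar n)) : (t + u + .single y 1) vl = (t + .single z 1) vl := by
    rcases hy with rfl | rfl <;> rcases hz with rfl | rfl <;> simp [forall_mem_specialVars.1 hus]
  have hsum (t : Mon (MVar n)) : (t + u + .single y 1) vb + (t + u + .single y 1) vbb =
      (t + .single z 1) vb + (t + .single z 1) vbb + 1 := by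
    rcases hy with rfl | rfl <;> rcases hz with rfl | rfl <;>
      simp [forall_mem_specialVars.1 hus, ← add_assoc, add_right_comm]
  rw [mul_right_comm, mul_comm (X vl), hu, X, X, X, monomial_mul, monomial_mul, monomial_mul]
  simp only [mul_one]
  refine respects_add fun t => ?_
  rw [← add_assoc, ← add_assoc, ← add_assoc, add_single_vl_mem_ellClass_iff,
    add_single_vl_mem_ellClass_iff, hcount, hvl, hsum, Pi.single_add, bAt_add, map_add, map_add,
    map_add, levels_single_of_mem_specialVars _ _ _ hys, levels_single_of_mem_specialVars _ _ _ hzs,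
    huf, add_zero, add_zero, Fin.val_last, add_left_inj]

theorem respects_ellClass_of_mem_GG (hm : m₁ + m₂ < en n) {p : MPoly n} (hp : p ∈ GG n) :
    Respects (ellClass n m₁ m₂) p := by
  have hcs := avoids_ellClass_vC_mul_vS hm
  have hvC : Avoids (ellClass n m₁ m₂) (X (vC true 3 (Fin.last n))) :=
    (isLift_X_vC 3 (Fin.last n)).avoids_ellClass (k := n) (by simp [cAt, Level.ext_iff])
  have hvB : Avoids (ellClass n m₁ m₂) (X (vB true 3 (Fin.last n))) :=
    (isLift_X_vB 3 (Fin.last n)).avoids_ellClass (k := n) (by simp [bAt, Level.ext_iff])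
  have h := forall_mem_specialVars.1 (levels_single_of_mem_specialVars (n := n) true 1)
  rcases hp with rfl | rfl | rfl | rfl | rfl | rfl | rfl
  · refine respects_ellClass_of_counterClass (.inl rfl) (.inl rfl) fun t => ?_
    simp [counterClass, h, ← add_assoc, add_right_comm]
  · refine respects_ellClass_of_counterClass (.inr rfl) (.inr rfl) fun t => ?_
    simp [counterClass, h, ← add_assoc, add_right_comm]
  · exact respects_ellClass_vl
  · exact (hvC.mul_X _).respects_add hcs
  · exact ((hvB.mul_X _).mul_X _).respects_add (hcs.mul_X _)
  · exact ((hvB.mul_X _).mul_X _).respects_add (hcs.mul_X _)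
  · exact (hvC.mul_X _).respects_add avoids_ellClass_vs

theorem respects_ellClass_of_mem_FF (hm : m₁ + m₂ < en n) {p : MPoly n} (hp : p ∈ FF n) :
    Respects (ellClass n m₁ m₂) p := by
  rcases hp with (hp | hp) | hp
  · exact respects_ellClass_of_isRule_false (isRule_of_mem_PP hp)
  · exact respects_ellClass_of_isRule_true (isRule_of_mem_PP hp)
  · exact respects_ellClass_of_mem_GG hm hp

end EllClass

section Main

variable {n m₁ m₂ : ℕ}

theorem one_le_of_balance_levels {bar : Bool} {M : Mon (MVar n)} {i : Fin 4} {Γ : Fin 4 → ℕ}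
    (h : Balance (levels bar M) n i Γ) : 1 ≤ M (vC bar i (Fin.last n)) := by
  obtain ⟨v, -, hc, -⟩ := h
  have hci : (levels bar M (Fin.last n : Fin (n + 1))).c i = 1 := by simp [hc]
  rw [levels_apply] at hci
  exact hci.ge

theorem MonOrd.le_of_mem_counterClass (μ : MonOrd (MVar n))
    (hc : μ.le (.single vc 1) (.single vb 1)) (hcb : μ.le (.single vcb 1) (.single vbb 1))
    {y : MVar n} {M : Mon (MVar n)} (hy : y = vl ∨ y = vC false 3 (Fin.last n))
    (hl : μ.le (.single vl 1) (.single y 1)) (hM : M ∈ counterClass n m₁ m₂) (hMy : 1 ≤ M y) :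
    μ.le (.single vl 1 + .single vcb m₁ + .single vc m₂) M := by
  obtain ⟨-, -, rfl, rfl⟩ := hM
  have hvc : μ.le (.single vc (M vc + M vb)) (.single vc (M vc) + .single vb (M vb)) := by
    rw [Finsupp.single_add]
    exact μ.add_le_add_of_le_of_le (μ.le_refl _) (μ.single_le_single hc _)
  have hvcb : μ.le (.single vcb (M vcb + M vbb)) (.single vcb (M vcb) + .single vbb (M vbb)) := by
    rw [Finsupp.single_add]
    exact μ.add_le_add_of_le_of_le (μ.le_refl _) (μ.single_le_single hcb _)
  refine μ.le_trans _ _ _ (μ.add_le_add_of_le_of_le (μ.add_le_add_of_le_of_le hl hvcb) hvc)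
    (μ.le_of_le fun x => ?_)
  simp only [Finsupp.add_apply, Finsupp.single_apply]
  rcases hy with rfl | rfl <;> grind

theorem MonOrd.le_of_mem_ellClass (μ : MonOrd (MVar n)) (hc : μ.le (.single vc 1) (.single vb 1))
    (hcb : μ.le (.single vcb 1) (.single vbb 1))
    (hl : μ.le (.single vl 1) (.single (vC false 3 (Fin.last n)) 1)) {M : Mon (MVar n)}
    (hM : M ∈ ellClass n m₁ m₂) : μ.le (.single vl 1 + .single vcb m₁ + .single vc m₂) M := by
  obtain ⟨hcount, ⟨hMl, -⟩ | ⟨-, hbal⟩⟩ := hM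
  · exact μ.le_of_mem_counterClass hc hcb (.inl rfl) (μ.le_refl _) hcount hMl.ge
  · exact μ.le_of_mem_counterClass hc hcb (.inr rfl) hl hcount (one_le_of_balance_levels hbal)

theorem span_FF_le : Ideal.span (FF n) ≤ Ideal.span (X '' {x | x ≠ vc ∧ x ≠ vcb}) := by
  set I : Ideal (MPoly n) := Ideal.span (X '' {x | x ≠ vc ∧ x ≠ vcb})
  have hX (x : MVar n) (h : x ≠ vc) (h' : x ≠ vcb) : Ideal.Quotient.mk I (X x) = 0 :=
    Ideal.Quotient.eq_zero_iff_mem.2 (Ideal.subset_span ⟨x, ⟨h, h'⟩, rfl⟩)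
  rw [Ideal.span_le]
  intro p hp
  rw [SetLike.mem_coe, ← Ideal.Quotient.eq_zero_iff_mem]
  have hP (bar) (h : p ∈ PP n bar) : Ideal.Quotient.mk I p = 0 := by
    rcases h with ⟨j, rfl⟩ | h
    · simp [hX]
    · obtain ⟨k, (rfl | rfl | rfl | rfl | rfl | rfl) | ⟨j, rfl⟩⟩ := Set.mem_iUnion.1 h <;> simp [hX]
  rcases hp with (hp | hp) | rfl | rfl | rfl | rfl | rfl | rfl | rfl
  · exact hP _ hp
  · exact hP _ hp
  all_goals simp [hX]

theorem mem_support_of_sub_mem_span_FF {f : MPoly n}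
    (h : monomial (.single vcb m₁ + .single vc m₂) 1 - f ∈ Ideal.span (FF n)) :
    .single vcb m₁ + .single vc m₂ ∈ f.support := by
  by_contra hf
  obtain ⟨x, ⟨hxc, hxcb⟩, hx⟩ := mem_ideal_span_X_image.1 (span_FF_le h)
    (.single vcb m₁ + .single vc m₂) (by simp [notMem_support_iff.1 hf])
  exact hx (by simp [hxc.symm, hxcb.symm])

theorem stmt18_general (n : ℕ) (μ : MonOrd (MVar n)) (hc : μ.le (.single vc 1) (.single vb 1))
    (hcb : μ.le (.single vcb 1) (.single vbb 1))
    (hl : μ.le (.single vl 1) (.single (vC false 3 (Fin.last n)) 1))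
    (g : Mon (MVar n)) (hg : g ∈ Dmon n) (f : MPoly n)
    (h : (monomial g 1 : MPoly n) + f ∈ Ideal.span (FF n)) :
    polyLe μ.le (monomial g 1) f := by
  rw [← CharTwo.sub_eq_add] at h
  obtain ⟨j, m₁, m₂, hj, hm, rfl⟩ := hg
  obtain rfl | rfl : j = 0 ∨ j = 1 := by omega
  · rw [Finsupp.single_zero, zero_add] at h ⊢
    exact μ.polyLe_monomial (mem_support_of_sub_mem_span_FF h) (μ.le_refl _)
  · obtain ⟨t, ht, htS⟩ := exists_mem_support_of_respects
      (fun p hp => respects_ellClass_of_mem_FF (by omega) hp) ell_mem_ellClass h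
    exact μ.polyLe_monomial ht (μ.le_of_mem_ellClass hc hcb hl htS)

theorem wdeg_eq_linearCombination (w : MVar n → ℝ) (t : Mon (MVar n)) :
    wdeg w t = Finsupp.linearCombination ℕ w t := by
  simp [wdeg, Finsupp.linearCombination_apply]

theorem wdeg_injective {w : MVar n → ℝ} (hind : LinearIndependent ℚ w) :
    Function.Injective (wdeg w) := fun t u h =>
  hind.restrict_scalars' (R := ℕ)
    (by rwa [← wdeg_eq_linearCombination, ← wdeg_eq_linearCombination])

theorem wLe_iff_wdeg_le {w : MVar n → ℝ} (hind : LinearIndependent ℚ w) {t u : Mon (MVar n)} :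
    wLe w t u ↔ wdeg w t ≤ wdeg w u := by
  rw [wLe, le_iff_eq_or_lt, (wdeg_injective hind).eq_iff]

/-- The weighted monomial order `≼_w`. -/
def weightOrd (w : MVar n → ℝ) (hpos : ∀ x, 0 < w x) (hind : LinearIndependent ℚ w) :
    MonOrd (MVar n) where
  le := wLe w
  le_refl t := .inl rfl
  le_trans t u v := by
    simp only [wLe_iff_wdeg_le hind]
    exact le_trans
  le_antisymm t u := by
    simp only [wLe_iff_wdeg_le hind]
    exact fun h h' => wdeg_injective hind (le_antisymm h h')
  le_total t u := by
    simp only [wLe_iff_wdeg_le hind]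
    exact le_total _ _
  zero_le t := by
    rw [wLe_iff_wdeg_le hind]
    simpa [wdeg, Finsupp.sum] using
      Finset.sum_nonneg fun x _ => mul_nonneg (Nat.cast_nonneg (t x)) (hpos x).le
  add_le_add t u v := by
    simp only [wLe_iff_wdeg_le hind, wdeg_eq_linearCombination, map_add]
    exact fun h => add_le_add_left h _

theorem wLe_single {w : MVar n → ℝ} {x y : MVar n} (h : w x < w y) :
    wLe w (.single x 1) (.single y 1) := .inr (by simpa [wdeg] using h)

end Main

open MVar in
/-- Let `w` be an injective weight map with positive, `ℚ`-linearly
independent values, `w(s) < w(c) < w(c̄) < w(ℓ) < w(b) < w(b̄)`, and `w(y) < w(x)` for every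
`y ∈ {s,c,c̄,ℓ,b,b̄}` and variable `x` outside this set. Then for every `g ∈ D` and every
polynomial `f` with `g + f ∈ ⟨𝓕⟩`, one has `g ≼_w f` (the weighted order extended to
polynomials). -/
theorem stmt18 (n : ℕ) (w : MVar n → ℝ)
    (hinj : Function.Injective w)
    (hpos : ∀ x, 0 < w x)
    (hind : LinearIndependent ℚ w)
    (h1 : w vs < w vc) (h2 : w vc < w vcb) (h3 : w vcb < w vl)
    (h4 : w vl < w vb) (h5 : w vb < w vbb)
    (hsmall : ∀ x : MVar n, x ∉ ({vs, vc, vcb, vl, vb, vbb} : Set (MVar n)) →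
      ∀ y ∈ ({vs, vc, vcb, vl, vb, vbb} : Set (MVar n)), w y < w x)
    (g : Mon (MVar n)) (hg : g ∈ Dmon n) (f : MPoly n)
    (h : (monomial g 1 : MPoly n) + f ∈ Ideal.span (FF n)) :
    polyLe (wLe w) (monomial g 1) f :=
  stmt18_general n (weightOrd w hpos hind) (wLe_single (h2.trans (h3.trans h4)))
    (wLe_single (h3.trans (h4.trans h5))) (wLe_single (hsmall _ (by simp) _ (by simp))) g hg f h
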